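/- Let d be a rational prime, m ≥ 2, n ≥ 1, and let c_0 be a root of the Misiurewicz polynomial G_{d,m,n}(c). Set K = ℚ(c_0), with ring of integers O_K, and a_i = f_{c_0,d}^i(0) for 1 ≤ i ≤ m+n−1. Then every element a_i of the critical orbit {a_1, …, a_{m+n−1}} is square-free in O_K, i.e. the principal ideal (a_i) is not divisible by the square of any prime ideal of O_K. -/

import Mathlib

open Polynomial

noncomputable section

/-- `critPoly d i` is `f_{c,d}^i(0)` as a polynomial in the variable `c` over `ℤ`,
where `f_{c,d}(x) = x^d + c`. -/
def critPoly (d : ℕ) : ℕ → Polynomial ℤ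
  | 0 => 0
  | i + 1 => critPoly d i ^ d + X

/-- The field of rational functions in `c` over `ℚ`, realized as the fraction field of `ℤ[c]`. -/
abbrev RF : Type := FractionRing (Polynomial ℤ)

/-- The natural inclusion `ℤ[c] → ℚ(c)`. -/
def toRF (p : Polynomial ℤ) : RF := algebraMap (Polynomial ℤ) RF p

/-- `G_{d,0,n} = ∏_{k ∣ n} (f_{c,d}^k(0))^{μ(n/k)}` as a rational function. -/
def G0Rat (d n : ℕ) : RF :=
  ∏ k ∈ n.divisors, toRF (critPoly d k) ^ (ArithmeticFunction.moebius (n / k))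

/-- `F_{d,m,n}` as a rational function. -/
def FRat (d m n : ℕ) : RF :=
  ∏ k ∈ n.divisors,
    ((toRF (critPoly d (m + k)) - toRF (critPoly d m)) /
      (toRF (critPoly d (m - 1 + k)) - toRF (critPoly d (m - 1)))) ^
      (ArithmeticFunction.moebius (n / k))

/-- `G_{d,m,n}` (for `m ≥ 2`) as a rational function. -/
def GRat (d m n : ℕ) : RF :=
  if n ∣ m - 1 then FRat d m n / FRat d 1 n else FRat d m n

/-- `G : ℤ[c]` is the Misiurewicz polynomial `G_{d,m,n}` (for `m ≥ 2`). -/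
def IsMisiurewicz (d m n : ℕ) (G : Polynomial ℤ) : Prop := toRF G = GRat d m n

/-- `G0 : ℤ[c]` is the polynomial `G_{d,0,n}`. -/
def IsG0 (d n : ℕ) (G0 : Polynomial ℤ) : Prop := toRF G0 = G0Rat d n

/-- The critical orbit in an arbitrary commutative ring. -/
def orb {R : Type*} [CommRing R] (d : ℕ) (c : R) (i : ℕ) : R := (fun x => x ^ d + c)^[i] 0

section orbit
variable {R : Type*} [CommRing R] (d : ℕ) (c : R)

lemma orb_zero : orb d c 0 = 0 := rfl

lemma orb_succ (i : ℕ) : orb d c (i + 1) = orb d c i ^ d + c := by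
  simp [orb, Function.iterate_succ_apply']

lemma orb_map {S : Type*} [CommRing S] (f : R →+* S) (i : ℕ) :
    f (orb d c i) = orb d (f c) i := by
  induction i with
  | zero => simp [orb_zero]
  | succ i ih => simp [orb_succ, ih]

lemma orb_shift (i j l : ℕ) : orb d c i - orb d c j ∣ orb d c (i + l) - orb d c (j + l) := by
  induction l with
  | zero => simp
  | succ l ih =>
    rw [← add_assoc, ← add_assoc, orb_succ, orb_succ, add_sub_add_right_eq_sub]
    exact ih.trans (sub_dvd_pow_sub_pow _ _ d)

lemma orb_dvd_sub (i l : ℕ) : orb d c i ∣ orb d c (l + i) - orb d c l := by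
  have := orb_shift d c i 0 l
  rwa [orb_zero, sub_zero, zero_add, add_comm] at this

lemma orb_dvd_mul (k l : ℕ) : orb d c k ∣ orb d c (k * l) := by
  induction l with
  | zero => simp [orb_zero]
  | succ l ih =>
    have := orb_dvd_sub d c k (k * l)
    rw [← mul_add_one] at this
    exact (dvd_sub_left ih).mp this

lemma orb_sq_dvd (hd : 2 ≤ d) (j k : ℕ) (hk : 1 ≤ k) :
    orb d c j ^ 2 ∣ orb d c (j + k) - orb d c k := by
  obtain ⟨k, rfl⟩ := Nat.exists_eq_add_of_le' hk
  have h := orb_shift d c (j + 1) 1 k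
  have e : orb d c (j + 1) - orb d c 1 = orb d c j ^ d := by
    rw [orb_succ, show (1 : ℕ) = 0 + 1 from rfl, orb_succ, orb_zero,
      zero_pow (by omega)]; ring
  rw [e, add_assoc, add_comm 1 k] at h
  exact (pow_dvd_pow _ hd).trans h

lemma orb_mul (hd : 2 ≤ d) (k l : ℕ) (hk : 1 ≤ k) (hl : 1 ≤ l) :
    ∃ w, orb d c (k * l) = orb d c k * (1 + orb d c k * w) := by
  obtain ⟨l, rfl⟩ := Nat.exists_eq_add_of_le' hl
  have h := orb_sq_dvd d c hd (k * l) k hk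
  have h2 := (pow_dvd_pow_of_dvd (orb_dvd_mul d c k l) 2).trans h
  obtain ⟨w, hw⟩ := h2
  refine ⟨w, ?_⟩
  rw [mul_add_one]
  linear_combination hw

lemma orb_mem_iff (P : Ideal R) (k : ℕ) (hk : 1 ≤ k) (hkP : orb d c k ∈ P)
    (hmin : ∀ j, 1 ≤ j → j < k → orb d c j ∉ P) (i : ℕ) : orb d c i ∈ P ↔ k ∣ i := by
  constructor
  · intro hi
    have h1 : orb d c (k * (i / k)) ∈ P := P.mem_of_dvd (orb_dvd_mul d c k _) hkP
    have h2 := P.mem_of_dvd (orb_dvd_sub d c (k * (i / k)) (i % k)) h1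
    rw [Nat.mod_add_div] at h2
    have h3 : orb d c (i % k) ∈ P := (Submodule.sub_mem_iff_right P hi).mp h2
    by_contra hne
    exact hmin _ (Nat.pos_of_ne_zero fun h => hne (Nat.dvd_of_mod_eq_zero h))
      (Nat.mod_lt _ (by omega)) h3
  · rintro ⟨l, rfl⟩
    exact P.mem_of_dvd (orb_dvd_mul d c k l) hkP

/-- The homogeneous sum `(u^d - v^d)/(u-v)`. -/
def hs (d : ℕ) (u v : R) : R := ∑ i ∈ Finset.range d, u ^ i * v ^ (d - 1 - i)

lemma hs_mul (u v : R) : hs d u v * (u - v) = u ^ d - v ^ d := by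
  unfold hs; exact (Commute.all u v).geom_sum₂_mul d

lemma hs_map {S : Type*} [CommRing S] (f : R →+* S) (u v : R) :
    f (hs d u v) = hs d (f u) (f v) := by simp [hs]

lemma hs_self (u : R) : hs d u u = d * u ^ (d - 1) := by
  unfold hs
  rw [Finset.sum_congr rfl (g := fun _ => u ^ (d - 1))]
  · simp
  · intro i hi
    rw [← pow_add]; congr 1; have := Finset.mem_range.mp hi; omega

lemma hs_sub_dvd (u v : R) : u - v ∣ hs d u v - d * v ^ (d - 1) := by
  rw [← hs_self, hs, hs, ← Finset.sum_sub_distrib]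
  refine Finset.dvd_sum fun i _ => ?_
  rw [← sub_mul]
  exact (sub_dvd_pow_sub_pow u v i).mul_right _

lemma hs_smul (x u v : R) : hs d (x * u) (x * v) = x ^ (d - 1) * hs d u v := by
  unfold hs
  rw [Finset.mul_sum]
  refine Finset.sum_congr rfl fun i hi => ?_
  have : d - 1 = i + (d - 1 - i) := by have := Finset.mem_range.mp hi; omega
  rw [mul_pow, mul_pow]
  conv_rhs => rw [this, pow_add]
  rw [← this]; ring

lemma orb_hs (t n : ℕ) : hs d (orb d c (t + n)) (orb d c t) * (orb d c (t + n) - orb d c t)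
    = orb d c (t + 1 + n) - orb d c (t + 1) := by
  rw [hs_mul, add_right_comm, orb_succ, orb_succ]; ring

end orbit

lemma critPoly_eq (d i : ℕ) : critPoly d i = orb d (X : ℤ[X]) i := by
  induction i with
  | zero => rfl
  | succ i ih => rw [critPoly, orb_succ, ih]

lemma orbX_inj (d : ℕ) (hd : 2 ≤ d) : Function.Injective (fun i => orb d (X : ℤ[X]) i) := by
  have hm : ∀ i, 0 ≤ orb d (1 : ℤ) i ∧ orb d (1 : ℤ) i < orb d (1 : ℤ) (i + 1) := by
    intro i
    have h0 : 0 ≤ orb d (1 : ℤ) i := by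
      induction i with
      | zero => simp [orb_zero]
      | succ i ih => rw [orb_succ]; positivity
    refine ⟨h0, ?_⟩
    rw [orb_succ]
    rcases h0.eq_or_lt with h | h
    · rw [← h]; positivity
    · have := le_self_pow₀ (show 1 ≤ orb d (1 : ℤ) i by omega) (show d ≠ 0 by omega)
      omega
  have hs := strictMono_nat_of_lt_succ (f := orb d (1 : ℤ)) fun i => (hm i).2
  intro i j hij
  apply hs.injective
  have := congrArg (Polynomial.evalRingHom (1 : ℤ)) hij
  simpa [orb_map] using this

section units
variable {D : Type*} [CommRing D] [IsDomain D] (φ : ℤ[X] →+* D)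

/-- Rational functions which are units at the point given by `φ`. -/
def IsU (x : RF) : Prop := ∃ p q : ℤ[X], φ p ≠ 0 ∧ φ q ≠ 0 ∧ x = toRF p / toRF q

lemma toRF_inj {p q : ℤ[X]} (h : toRF p = toRF q) : p = q :=
  IsFractionRing.injective ℤ[X] RF h

lemma toRF_mul (p q : ℤ[X]) : toRF (p * q) = toRF p * toRF q := map_mul _ _ _
lemma toRF_sub (p q : ℤ[X]) : toRF (p - q) = toRF p - toRF q := map_sub _ _ _
lemma toRF_pow (p : ℤ[X]) (k : ℕ) : toRF (p ^ k) = toRF p ^ k := map_pow _ _ _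
lemma toRF_one : toRF 1 = 1 := map_one _
lemma toRF_ne {p : ℤ[X]} (h : p ≠ 0) : toRF p ≠ 0 := fun h0 =>
  h (toRF_inj (h0.trans (map_zero (algebraMap ℤ[X] RF)).symm))

lemma isU_of {p : ℤ[X]} (h : φ p ≠ 0) : IsU φ (toRF p) :=
  ⟨p, 1, h, by simp, by simp [toRF_one]⟩

variable {φ}

lemma isU_one : IsU φ 1 := ⟨1, 1, by simp, by simp, by simp [toRF_one]⟩

lemma IsU.mul {x y : RF} (hx : IsU φ x) (hy : IsU φ y) : IsU φ (x * y) := by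
  obtain ⟨p, q, hp, hq, rfl⟩ := hx
  obtain ⟨p', q', hp', hq', rfl⟩ := hy
  exact ⟨p * p', q * q', by simp [*], by simp [*], by rw [toRF_mul, toRF_mul, div_mul_div_comm]⟩

lemma IsU.inv {x : RF} (hx : IsU φ x) : IsU φ x⁻¹ := by
  obtain ⟨p, q, hp, hq, rfl⟩ := hx
  exact ⟨q, p, hq, hp, by rw [inv_div]⟩

lemma IsU.pow {x : RF} (hx : IsU φ x) (k : ℕ) : IsU φ (x ^ k) := by
  induction k with
  | zero => simpa using isU_one
  | succ k ih => rw [pow_succ]; exact ih.mul hx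

lemma IsU.zpow {x : RF} (hx : IsU φ x) (k : ℤ) : IsU φ (x ^ k) := by
  cases k with
  | ofNat k => simpa using hx.pow k
  | negSucc k => rw [zpow_negSucc]; exact (hx.pow _).inv

lemma IsU.prod {s : Finset ℕ} {f : ℕ → RF} (h : ∀ j ∈ s, IsU φ (f j)) :
    IsU φ (∏ j ∈ s, f j) :=
  Finset.prod_induction f (IsU φ) (fun _ _ => IsU.mul) isU_one h

lemma IsU.ne {G : ℤ[X]} (h : IsU φ (toRF G)) : φ G ≠ 0 := by
  obtain ⟨p, q, hp, hq, h⟩ := h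
  have hq0 : q ≠ 0 := by rintro rfl; simp at hq
  rw [eq_div_iff (toRF_ne hq0), ← toRF_mul] at h
  have := toRF_inj h
  intro h0
  apply hp
  rw [← this, map_mul, h0, zero_mul]

end units

/-- The polynomial factor. -/
def SP (d t j : ℕ) : ℤ[X] := hs d (orb d X (t + j)) (orb d X t)

lemma FRat_eq (d t n : ℕ) (hd : 2 ≤ d) :
    FRat d (t + 1) n = ∏ k ∈ n.divisors, toRF (SP d t k) ^ (ArithmeticFunction.moebius (n / k)) := by
  unfold FRat
  refine Finset.prod_congr rfl fun k hk => ?_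
  congr 1
  have hk0 := Nat.pos_of_mem_divisors hk
  rw [Nat.add_sub_cancel, ← toRF_sub, ← toRF_sub, div_eq_iff, ← toRF_mul]
  · simp only [critPoly_eq]
    rw [SP, orb_hs]
  · apply toRF_ne
    simp only [critPoly_eq]
    intro h
    have := orbX_inj d hd (sub_eq_zero.mp h)
    omega

lemma moebius_sum (k n : ℕ) (hn : 1 ≤ n) (hk : 1 ≤ k) (hkn : k ≠ n) :
    ∑ j ∈ n.divisors, (if k ∣ j then ArithmeticFunction.moebius (n / j) else 0) = 0 := by
  by_cases h : k ∣ n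
  · obtain ⟨r, rfl⟩ := h
    have hr : r ≠ 1 := by rintro rfl; simp at hkn
    have hr0 : r ≠ 0 := by rintro rfl; simp at hn
    have h1 : ∑ i ∈ r.divisors, ArithmeticFunction.moebius (r / i) = 0 := by
      rw [Nat.sum_div_divisors r (fun i => ArithmeticFunction.moebius i),
        ← ArithmeticFunction.coe_mul_zeta_apply, ArithmeticFunction.moebius_mul_coe_zeta,
        ArithmeticFunction.one_apply_ne hr]
    rw [← Finset.sum_filter]
    refine Eq.trans ?_ h1
    symm
    apply Finset.sum_bij (fun i _ => k * i)
    · intro i hi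
      simp only [Finset.mem_filter, Nat.mem_divisors] at hi ⊢
      exact ⟨⟨mul_dvd_mul_left k hi.1, by omega⟩, dvd_mul_right _ _⟩
    · intro i _ j _ h
      exact Nat.eq_of_mul_eq_mul_left hk h
    · intro j hj
      simp only [Finset.mem_filter, Nat.mem_divisors] at hj
      obtain ⟨⟨hj1, _⟩, i, rfl⟩ := hj
      exact ⟨i, Nat.mem_divisors.mpr ⟨Nat.dvd_of_mul_dvd_mul_left hk hj1, hr0⟩, rfl⟩
    · intro i _
      rw [Nat.mul_div_mul_left _ _ hk]
  · apply Finset.sum_eq_zero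
    intro j hj
    rw [if_neg]
    exact fun hkj => h (hkj.trans (Nat.dvd_of_mem_divisors hj))

section G
variable {D : Type*} [CommRing D] [IsDomain D] [CharZero D] (φ : ℤ[X] →+* D)

lemma GRat_isU_of_distinct (d t n : ℕ) (hd : 2 ≤ d)
    (h : ∀ i j, i < j → orb d (φ X) j ≠ orb d (φ X) i) : IsU φ (GRat d (t + 1) n) := by
  have hF : ∀ t, IsU φ (FRat d (t + 1) n) := by
    intro t
    rw [FRat_eq _ _ _ hd]
    refine IsU.prod fun j hj => (isU_of φ ?_).zpow _
    have hj0 := Nat.pos_of_mem_divisors hj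
    have := congrArg φ (orb_hs d (X : ℤ[X]) t j)
    rw [map_mul, map_sub φ (orb d X (t + 1 + j)), orb_map, orb_map] at this
    intro h0
    rw [SP] at h0
    rw [h0, zero_mul] at this
    exact h _ _ (by omega) (sub_eq_zero.mp this.symm)
  unfold GRat
  split_ifs
  · rw [div_eq_mul_inv]; exact (hF t).mul (hF 0).inv
  · exact hF t

lemma GRat_isU_of_periodic (d t n : ℕ) (hd : 2 ≤ d) (ht : 1 ≤ t) (hn : 1 ≤ n) (k : ℕ)
    (hk : 1 ≤ k) (hk0 : orb d (φ X) k = 0) (hmin : ∀ j, 1 ≤ j → j < k → orb d (φ X) j ≠ 0) :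
    IsU φ (GRat d (t + 1) n) := by
  have hz : ∀ i, orb d (φ X) i = 0 ↔ k ∣ i := by
    intro i
    have := orb_mem_iff d (φ X) ⊥ k hk (by simpa using hk0) (by simpa using hmin) i
    simpa using this
  have hdD : (d : D) ≠ 0 := Nat.cast_ne_zero.mpr (by omega)
  have hA : toRF (orb d X k) ≠ 0 := by
    apply toRF_ne
    intro h
    have := orbX_inj d hd (h.trans (orb_zero d (X : ℤ[X])).symm)
    omega
  have hU : ∀ l, k ∣ l → 1 ≤ l → ∃ w, φ w = 1 ∧ orb d (X : ℤ[X]) l = orb d X k * w := by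
    rintro l ⟨q, rfl⟩ hl
    obtain ⟨w, hw⟩ := orb_mul d (X : ℤ[X]) hd k q hk (Nat.pos_of_mul_pos_left hl)
    exact ⟨_, by simp [orb_map, hk0], hw⟩
  -- the unit lemma when `k ∤ t`
  have h1 : ∀ t j, ¬ k ∣ t → φ (SP d t j) ≠ 0 := by
    intro t j hkt h0
    have hm := congrArg φ (orb_hs d (X : ℤ[X]) t j)
    rw [SP] at h0
    rw [map_mul, h0, zero_mul] at hm
    have hm : orb d (φ X) (t + 1 + j) = orb d (φ X) (t + 1) := by
      rw [map_sub, orb_map, orb_map] at hm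
      exact sub_eq_zero.mp hm.symm
    -- push forward to get `k ∣ j`
    have hkj : k ∣ j := by
      have hs := orb_shift d (φ X) (t + 1 + j) (t + 1) (k * (t + 1) - (t + 1))
      rw [hm, sub_self, zero_dvd_iff] at hs
      have hle : t + 1 ≤ k * (t + 1) := Nat.le_mul_of_pos_left _ hk
      rw [show t + 1 + j + (k * (t + 1) - (t + 1)) = k * (t + 1) + j by omega,
        show t + 1 + (k * (t + 1) - (t + 1)) = k * (t + 1) by omega,
        (hz (k * (t + 1))).mpr (dvd_mul_right _ _), sub_zero, hz] at hs
      exact (Nat.dvd_add_right (dvd_mul_right _ _)).mp hs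
    have he : orb d (φ X) (t + j) = orb d (φ X) t := by
      have := orb_dvd_sub d (φ X) j t
      rw [(hz j).mpr hkj, zero_dvd_iff] at this
      exact sub_eq_zero.mp this
    rw [hs_map, orb_map, orb_map, he, hs_self] at h0
    have hne : orb d (φ X) t ≠ 0 := fun h => hkt ((hz t).mp h)
    exact mul_ne_zero hdD (pow_ne_zero _ hne) h0
  -- `k ∣ t`
  have h2 : ∀ t j, k ∣ t → ¬ k ∣ j → φ (SP d t j) ≠ 0 := by
    intro t j hkt hkj h0
    rw [SP, hs_map, orb_map, orb_map] at h0
    have hm := hs_mul d (orb d (φ X) (t + j)) (orb d (φ X) t)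
    rw [h0, zero_mul, (hz t).mpr hkt, zero_pow (by omega), sub_zero] at hm
    have := (hz _).mp (pow_eq_zero_iff (by omega) |>.mp hm.symm)
    exact hkj ((Nat.dvd_add_right hkt).mp this)
  have h3 : ∀ t j, 1 ≤ j → k ∣ t → k ∣ j →
      ∃ w, φ w ≠ 0 ∧ SP d t j = orb d X k ^ (d - 1) * w := by
    intro t j hj hkt hkj
    obtain ⟨u, hu, hu'⟩ := hU (t + j) (dvd_add hkt hkj) (by omega)
    rcases Nat.eq_zero_or_pos t with rfl | htp
    · refine ⟨hs d u 0, ?_, ?_⟩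
      · have := hs_mul d (1 : D) 0
        rw [zero_pow (by omega)] at this
        simp only [sub_zero, mul_one, one_pow] at this
        rw [hs_map, hu, map_zero, this]; exact one_ne_zero
      · rw [SP, hu', orb_zero, ← hs_smul, mul_zero]
    · obtain ⟨v, hv, hv'⟩ := hU t hkt htp
      refine ⟨hs d u v, ?_, ?_⟩
      · rw [hs_map, hu, hv, hs_self]; simpa using hdD
      · rw [SP, hu', hv', hs_smul]
  have hF : ∀ t, ∃ y, IsU φ y ∧ FRat d (t + 1) n = y *
      (if k ∣ t then (toRF (orb d X k) ^ (d - 1)) ^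
        (∑ j ∈ n.divisors, (if k ∣ j then ArithmeticFunction.moebius (n / j) else 0)) else 1) := by
    intro t
    rw [FRat_eq _ _ _ hd]
    by_cases hkt : k ∣ t
    · have : ∀ j : ℕ, ∃ w, 1 ≤ j → φ w ≠ 0 ∧ SP d t j =
          (if k ∣ j then orb d X k ^ (d - 1) else 1) * w := by
        intro j
        by_cases hkj : k ∣ j
        · by_cases hj : 1 ≤ j
          · obtain ⟨w, hw⟩ := h3 t j hj hkt hkj
            exact ⟨w, fun _ => by simpa [hkj] using hw⟩
          · exact ⟨0, fun h => absurd h hj⟩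
        · exact ⟨SP d t j, fun _ => ⟨h2 t j hkt hkj, by simp [hkj]⟩⟩
      choose w hw using this
      refine ⟨∏ j ∈ n.divisors, toRF (w j) ^ (ArithmeticFunction.moebius (n / j)),
        IsU.prod fun j hj => (isU_of φ (hw j (Nat.pos_of_mem_divisors hj)).1).zpow _, ?_⟩
      have hB : toRF (orb d X k) ^ (d - 1) ≠ 0 := pow_ne_zero _ hA
      have hpow : ∀ (s : Finset ℕ) (f : ℕ → ℤ), (toRF (orb d X k) ^ (d - 1)) ^ (∑ j ∈ s, f j)
          = ∏ j ∈ s, (toRF (orb d X k) ^ (d - 1)) ^ f j := by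
        intro s f
        induction s using Finset.induction_on with
        | empty => simp
        | insert a s ha ih => rw [Finset.sum_insert ha, Finset.prod_insert ha, zpow_add₀ hB, ih]
      rw [if_pos hkt, hpow, ← Finset.prod_mul_distrib]
      refine Finset.prod_congr rfl fun j hj => ?_
      rw [(hw j (Nat.pos_of_mem_divisors hj)).2, toRF_mul, mul_zpow, mul_comm]
      by_cases hkj : k ∣ j
      · simp [hkj, toRF_pow]
      · simp [hkj, toRF_one]
    · rw [if_neg hkt]
      exact ⟨_, IsU.prod fun j _ => (isU_of φ (h1 t j hkt)).zpow _, (mul_one _).symm⟩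
  obtain ⟨y, hy, hyF⟩ := hF t
  obtain ⟨z, hz', hzF⟩ := hF 0
  unfold GRat
  rw [Nat.add_sub_cancel]
  by_cases hkn : k = n
  · subst hkn
    split_ifs with hnt
    · rw [hyF, show FRat d 1 k = _ from hzF, if_pos hnt, if_pos (dvd_zero k),
        mul_div_mul_right _ _ (zpow_ne_zero _ (pow_ne_zero _ hA)), div_eq_mul_inv]
      exact hy.mul hz'.inv
    · rw [hyF, if_neg hnt, mul_one]; exact hy
  · have hs := moebius_sum k n hn hk hkn
    simp only [hs, zpow_zero, ite_self, mul_one] at hyF hzF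
    split_ifs
    · rw [hyF, show FRat d 1 n = _ from hzF, div_eq_mul_inv]
      exact hy.mul hz'.inv
    · rw [hyF]; exact hy

end G

lemma exists_lift (d : ℕ) (p q : ℤ[X])
    (h : p.map (Int.castRingHom (ZMod d)) = q.map (Int.castRingHom (ZMod d))) :
    ∃ w : ℤ[X], p = q + C (d : ℤ) * w := by
  have : C (d : ℤ) ∣ p - q := by
    rw [C_dvd_iff_dvd_coeff]
    intro i
    have := congrArg (fun r => r.coeff i) h
    simp only [coeff_map, eq_intCast] at this
    rw [coeff_sub, ← ZMod.intCast_eq_intCast_iff_dvd_sub, this]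
  obtain ⟨w, hw⟩ := this
  exact ⟨w, by rw [← hw]; ring⟩

/-- If `d ∈ P` then, locally at `P`, every `φ g ∈ P` is in `(A, d)`. -/
lemma local_gen {D : Type*} [CommRing D] (φ : ℤ[X] →+* D) (P : Ideal D) [P.IsPrime]
    (d : ℕ) (hd : d.Prime) (hdP : (d : D) ∈ P) (A : ℤ[X]) (hA : φ A ∈ P)
    (hA' : ∃ w, derivative A = 1 + C (d : ℤ) * w) (g : ℤ[X]) (hg : φ g ∈ P) :
    ∃ r g1 w, φ r ∉ P ∧ r * g = A * g1 + C (d : ℤ) * w := by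
  haveI := Fact.mk hd
  have hC : φ (C (d : ℤ)) = d := by simp
  have hsurj : ∀ p : (ZMod d)[X], ∃ q : ℤ[X], q.map (Int.castRingHom (ZMod d)) = p :=
    fun p => Polynomial.map_surjective _ (ZMod.ringHom_surjective _) p
  set A' := A.map (Int.castRingHom (ZMod d)) with hAd
  set g' := g.map (Int.castRingHom (ZMod d)) with hgd
  obtain ⟨r', hr'⟩ := EuclideanDomain.gcd_dvd_left A' g'
  obtain ⟨s', hs'⟩ := EuclideanDomain.gcd_dvd_right A' g'
  have hb := EuclideanDomain.gcd_eq_gcd_ab A' g'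
  obtain ⟨h, hh⟩ := hsurj (EuclideanDomain.gcd A' g')
  obtain ⟨u, hu⟩ := hsurj (EuclideanDomain.gcdA A' g')
  obtain ⟨v, hv⟩ := hsurj (EuclideanDomain.gcdB A' g')
  obtain ⟨r, hr⟩ := hsurj r'
  obtain ⟨s, hs⟩ := hsurj s'
  rw [← hh, ← hu, ← hv, hAd, hgd] at hb
  rw [← hh, ← hr, hAd] at hr'
  rw [← hh, ← hs, hgd] at hs'
  obtain ⟨w1, hw1⟩ := exists_lift d h (A * u + g * v) (by simpa using hb)
  obtain ⟨w2, hw2⟩ := exists_lift d A (h * r) (by simpa using hr')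
  obtain ⟨w3, hw3⟩ := exists_lift d g (h * s) (by simpa using hs')
  obtain ⟨w4, hw4⟩ := hA'
  have hhP : φ h ∈ P := by
    rw [hw1, map_add, map_add, map_mul, map_mul, map_mul, hC]
    exact P.add_mem (P.add_mem (P.mul_mem_right _ hA) (P.mul_mem_right _ hg))
      (P.mul_mem_right _ hdP)
  refine ⟨r, s, r * w3 - w2 * s, ?_, ?_⟩
  · intro hrP
    have hder := congrArg derivative hw2
    rw [hw4, derivative_add, derivative_mul, derivative_C_mul] at hder
    have h1 : (1 : ℤ[X]) = derivative h * r + h * derivative r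
        + C (d : ℤ) * (derivative w2 - w4) := by linear_combination hder
    have h2 := congrArg φ h1
    rw [map_one, map_add, map_add, map_mul, map_mul, map_mul, hC] at h2
    apply (Ideal.ne_top_iff_one P).mp (Ideal.IsPrime.ne_top ‹_›)
    rw [h2]
    exact P.add_mem (P.add_mem (P.mul_mem_left _ hrP) (P.mul_mem_right _ hhP))
      (P.mul_mem_right _ hdP)
  · linear_combination r * hw3 - s * hw2

lemma orb_derivative (d k : ℕ) (hk : 1 ≤ k) :
    ∃ w, derivative (orb d (X : ℤ[X]) k) = 1 + C (d : ℤ) * w := by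
  obtain ⟨k, rfl⟩ := Nat.exists_eq_add_of_le' hk
  refine ⟨orb d X k ^ (d - 1) * derivative (orb d X k), ?_⟩
  rw [orb_succ, derivative_add, derivative_pow, derivative_X]
  simp; ring

/-- Key: locally at `P`, `x ∣ d`. -/
lemma key_dvd {D : Type*} [CommRing D] [IsDomain D] (φ : ℤ[X] →+* D) (P : Ideal D)
    [P.IsPrime] (d : ℕ) (hd : 2 ≤ d) (t n : ℕ) (ht : 1 ≤ t)
    (h1 : orb d (φ X) (t + 1 + n) = orb d (φ X) (t + 1))
    (h2 : orb d (φ X) (t + n) ≠ orb d (φ X) t) (k : ℕ) (hk : 1 ≤ k)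
    (hk0 : orb d (φ X) k ≠ 0)
    (hkP : orb d (φ X) k ∈ P) (hmin : ∀ j, 1 ≤ j → j < k → orb d (φ X) j ∉ P) :
    ∃ U Z : ℤ[X], φ U ∉ P ∧ φ U * d = orb d (φ X) k * φ Z := by
  have hz := orb_mem_iff d (φ X) P k hk hkP hmin
  have hkn : k ∣ n := by
    have hs := orb_shift d (φ X) (t + 1 + n) (t + 1) (k * (t + 1) - (t + 1))
    rw [h1, sub_self, zero_dvd_iff] at hs
    have hle : t + 1 ≤ k * (t + 1) := Nat.le_mul_of_pos_left _ hk
    rw [show t + 1 + n + (k * (t + 1) - (t + 1)) = k * (t + 1) + n by omega,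
      show t + 1 + (k * (t + 1) - (t + 1)) = k * (t + 1) by omega] at hs
    have h3 : orb d (φ X) (k * (t + 1) + n) ∈ P := by
      rw [sub_eq_zero.mp hs]; exact (hz _).mpr (dvd_mul_right _ _)
    exact (Nat.dvd_add_right (dvd_mul_right _ _)).mp ((hz _).mp h3)
  have hsum : hs d (orb d (φ X) (t + n)) (orb d (φ X) t) = 0 := by
    have := orb_hs d (φ X) t n
    rw [h1, sub_self] at this
    exact (mul_eq_zero.mp this).resolve_right (sub_ne_zero.mpr h2)
  by_cases hkt : k ∣ t
  · obtain ⟨q, rfl⟩ := hkt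
    obtain ⟨q', rfl⟩ := hkn
    have hq : 1 ≤ q := Nat.pos_of_mul_pos_left ht
    obtain ⟨w1, hw1⟩ := orb_mul d (X : ℤ[X]) hd k q hk hq
    obtain ⟨w2, hw2⟩ := orb_mul d (X : ℤ[X]) hd k (q + q') hk (by omega)
    have e1 := congrArg φ hw1
    have e2 := congrArg φ hw2
    rw [map_mul, orb_map, orb_map] at e1 e2
    rw [← mul_add, e1, e2, hs_smul] at hsum
    have h0 := (mul_eq_zero.mp hsum).resolve_left (pow_ne_zero _ hk0)
    obtain ⟨b, hb⟩ := hs_sub_dvd d (1 + orb d X k * w2) (1 + orb d X k * w1)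
    have hb' := congrArg φ hb
    rw [map_sub, hs_map, h0] at hb'
    refine ⟨(1 + orb d X k * w1) ^ (d - 1), (w1 - w2) * b, ?_, ?_⟩
    · rw [map_pow]
      intro hm
      have hm := Ideal.IsPrime.mem_of_pow_mem ‹_› _ hm
      rw [map_add, map_one, map_mul, orb_map] at hm
      exact (Ideal.ne_top_iff_one P).mp (Ideal.IsPrime.ne_top ‹_›)
        ((P.add_mem_iff_left (P.mul_mem_right _ hkP)).mp hm)
    · simp only [map_sub, map_mul, map_add, map_one, map_pow, map_natCast, orb_map] at hb' ⊢
      linear_combination -hb'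
  · have hdv : orb d (X : ℤ[X]) k ∣ orb d X (t + n) - orb d X t := by
      obtain ⟨q', rfl⟩ := hkn
      exact (orb_dvd_mul d X k q').trans (orb_dvd_sub d X _ t)
    obtain ⟨b, hb⟩ := hdv.trans (hs_sub_dvd d (orb d X (t + n)) (orb d (X : ℤ[X]) t))
    have hb' := congrArg φ hb
    rw [map_sub, hs_map, orb_map, orb_map, hsum] at hb'
    refine ⟨orb d X t ^ (d - 1), -b, ?_, ?_⟩
    · rw [map_pow, orb_map]
      exact fun hm => hkt ((hz t).mp (Ideal.IsPrime.mem_of_pow_mem ‹_› _ hm))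
    · simp only [map_sub, map_mul, map_neg, map_pow, map_natCast, orb_map] at hb' ⊢
      linear_combination -hb'

lemma pow_primary {D : Type*} [CommRing D] (P : Ideal D) [hP : P.IsMaximal] (k : ℕ)
    {a b : D} (ha : a ∉ P) (hab : a * b ∈ P ^ k) : b ∈ P ^ k := by
  have h1 : IsCoprime (Ideal.span {a}) P := by
    rw [Ideal.isCoprime_iff_sup_eq, sup_comm]
    exact hP.1.2 _ (lt_of_le_of_ne le_sup_left fun h => ha (by
      rw [h]; exact Ideal.mem_sup_right (Ideal.mem_span_singleton_self a)))
  have h2 := h1.pow_right (n := k)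
  rw [Ideal.isCoprime_iff_exists] at h2
  obtain ⟨x, hx, y, hy, hxy⟩ := h2
  obtain ⟨z, rfl⟩ := Ideal.mem_span_singleton'.mp hx
  have : b = z * (a * b) + y * b := by linear_combination -b * hxy
  rw [this]
  exact (P ^ k).add_mem ((P ^ k).mul_mem_left _ hab) ((P ^ k).mul_mem_right _ hy)

/-- Local structure of elements of `φ ℤ[X]`. -/
lemma local_form {D : Type*} [CommRing D] [IsDomain D] (φ : ℤ[X] →+* D) (P : Ideal D)
    [P.IsMaximal] (x : D) (hx : x ∈ P)
    (H : ∀ g, φ g ∈ P → ∃ s h, φ s ∉ P ∧ φ s * φ g = x * φ h) (k : ℕ) (g : ℤ[X])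
    (hg : φ g ∉ P ^ k) : ∃ e σ τ, φ σ ∉ P ∧ φ τ ∉ P ∧ φ σ * φ g = x ^ e * φ τ := by
  induction k generalizing g with
  | zero => simp at hg
  | succ k ih =>
    by_cases hgP : φ g ∈ P
    · obtain ⟨s, h, hs, hsh⟩ := H g hgP
      have hh : φ h ∉ P ^ k := by
        intro hh
        apply hg
        apply pow_primary P (k + 1) hs
        rw [hsh, pow_succ']
        exact Ideal.mul_mem_mul hx hh
      obtain ⟨e, σ, τ, hσ, hτ, he⟩ := ih h hh
      refine ⟨e + 1, σ * s, τ, ?_, hτ, ?_⟩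
      · rw [map_mul]
        exact fun hm => ((Ideal.IsMaximal.isPrime ‹_›).mem_or_mem hm).elim hσ hs
      · rw [map_mul]
        linear_combination φ σ * hsh + x * he
    · exact ⟨0, 1, g, by
        rw [map_one]; exact (Ideal.ne_top_iff_one P).mp (Ideal.IsMaximal.ne_top ‹_›), hgP, by simp⟩

lemma exists_int_mul (K : Type*) [Field K] [NumberField K] (c₀ : NumberField.RingOfIntegers K)
    (hgen : Algebra.adjoin ℚ {(c₀ : K)} = ⊤) (y : NumberField.RingOfIntegers K) :
    ∃ (N : ℤ) (g : ℤ[X]), N ≠ 0 ∧ (N : NumberField.RingOfIntegers K) * y = aeval c₀ g := by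
  have hy : (y : K) ∈ Algebra.adjoin ℚ {(c₀ : K)} := by rw [hgen]; trivial
  rw [Algebra.adjoin_singleton_eq_range_aeval] at hy
  obtain ⟨p, hp⟩ := hy
  obtain ⟨N, hN, hN'⟩ := IsLocalization.integerNormalization_spec (nonZeroDivisors ℤ) p
  refine ⟨N, IsLocalization.integerNormalization (nonZeroDivisors ℤ) p,
    nonZeroDivisors.ne_zero hN, ?_⟩
  apply NumberField.RingOfIntegers.coe_injective
  have h1 := congrArg (aeval (c₀ : K)) hN'
  rw [aeval_map_algebraMap, map_zsmul, zsmul_eq_mul] at h1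
  have hp' : aeval (c₀ : K) p = (y : K) := hp
  rw [hp'] at h1
  rw [map_mul, map_intCast, ← h1]
  exact aeval_algebraMap_apply K c₀ _

/-- Let `d` be a prime, `m ≥ 2`, `n ≥ 1`, and `c₀` a root of `G_{d,m,n}`,
`K = ℚ(c₀)`, `a_i = f_{c₀,d}^i(0)` for `1 ≤ i ≤ m+n-1`. Then every element `a_i` of the
critical orbit is square-free in `O_K`: the ideal `(a_i)` is not divisible by the square of
any prime ideal of `O_K`. -/
theorem orbit_squarefree (d m n : ℕ) (hd : d.Prime) (hm : 2 ≤ m) (hn : 1 ≤ n)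
    (G : Polynomial ℤ) (hG : IsMisiurewicz d m n G)
    (K : Type*) [Field K] [NumberField K] (c₀ : NumberField.RingOfIntegers K)
    (hroot : Polynomial.aeval (c₀ : K) G = 0)
    (hgen : Algebra.adjoin ℚ {(c₀ : K)} = ⊤)
    (i : ℕ) (hi1 : 1 ≤ i) (hi2 : i ≤ m + n - 1)
    (P : Ideal (NumberField.RingOfIntegers K)) (hP : P.IsPrime) :
    ¬ P ^ 2 ∣ Ideal.span {(fun x => x ^ d + c₀)^[i] 0} := by
  set φ : ℤ[X] →+* (NumberField.RingOfIntegers K) := (aeval c₀ : ℤ[X] →ₐ[ℤ] (NumberField.RingOfIntegers K)).toRingHom with hφ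
  have hφX : φ X = c₀ := by simp [hφ]
  have hd2 := hd.two_le
  obtain ⟨t, rfl⟩ := Nat.exists_eq_add_of_le' (show 1 ≤ m by omega)
  have hG0 : φ G = 0 := by
    apply NumberField.RingOfIntegers.coe_injective
    rw [map_zero, ← hroot]
    exact (aeval_algebraMap_apply K c₀ G).symm
  have hnU : ¬ IsU φ (GRat d (t + 1) n) := by
    rw [← show toRF G = _ from hG]
    exact fun h => h.ne hG0
  -- not periodic
  have hnp : ∀ k, 1 ≤ k → orb d c₀ k ≠ 0 := by
    by_contra! hcon
    classical
    have hs := Nat.find_spec hcon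
    refine hnU (GRat_isU_of_periodic φ d t n hd2 (by omega) hn (Nat.find hcon) hs.1
      (by rw [hφX]; exact hs.2) ?_)
    intro j hj hj'
    rw [hφX]
    exact fun h => Nat.find_min hcon hj' ⟨hj, h⟩
  -- preperiodic
  have hpre : ∃ T N, 1 ≤ T ∧ orb d c₀ (T + 1 + N) = orb d c₀ (T + 1) ∧
      orb d c₀ (T + N) ≠ orb d c₀ T := by
    have : ∃ i j, i < j ∧ orb d c₀ j = orb d c₀ i := by
      by_contra! hcon
      exact hnU (GRat_isU_of_distinct φ d t n hd2 (by rw [hφX]; exact hcon))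
    obtain ⟨i, j, hij, he⟩ := this
    obtain ⟨N, rfl⟩ := Nat.exists_eq_add_of_lt hij
    have hex : ∃ i, orb d c₀ (i + (N + 1)) = orb d c₀ i := ⟨i, he⟩
    classical
    have hs := Nat.find_spec hex
    have hm := fun j => Nat.find_min hex (m := j)
    generalize Nat.find hex = M at hs hm
    match M, hs, hm with
    | 0, hs, _ => exact absurd (by simpa [orb_zero] using hs) (hnp (N + 1) (by omega))
    | 1, hs, _ =>
      rw [add_comm, orb_succ, show (1 : ℕ) = 0 + 1 from rfl, orb_succ d c₀ 0, orb_zero,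
        zero_pow (by omega)] at hs
      have : orb d c₀ (N + 1) ^ d = 0 := by simpa using hs
      exact absurd (pow_eq_zero_iff (by omega) |>.mp this) (hnp (N + 1) (by omega))
    | T + 2, hs, hm => exact ⟨T + 1, N + 1, by omega, hs, hm (T + 1) (by omega)⟩
  obtain ⟨T, N, hT, hTN, hTN'⟩ := hpre
  change ¬ P ^ 2 ∣ Ideal.span {orb d c₀ i}
  rw [Ideal.dvd_span_singleton]
  intro hi
  have hiP : orb d c₀ i ∈ P := Ideal.pow_le_self two_ne_zero hi
  have hPbot : P ≠ ⊥ := by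
    rintro rfl
    exact hnp i hi1 (by simpa using hiP)
  haveI : P.IsMaximal := hP.isMaximal hPbot
  classical
  have hex : ∃ k, 1 ≤ k ∧ orb d c₀ k ∈ P := ⟨i, hi1, hiP⟩
  have hks := Nat.find_spec hex
  have hkm : ∀ j, 1 ≤ j → j < Nat.find hex → orb d c₀ j ∉ P :=
    fun j hj hj' h => Nat.find_min hex hj' ⟨hj, h⟩
  generalize Nat.find hex = k at hks hkm
  obtain ⟨hk, hkP⟩ := hks
  have hx2 : orb d c₀ k ∈ P ^ 2 := by
    obtain ⟨l, rfl⟩ := (orb_mem_iff d c₀ P k hk hkP hkm i).mp hiP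
    obtain ⟨w, hw⟩ := orb_mul d c₀ hd2 k l hk (Nat.pos_of_mul_pos_left hi1)
    apply pow_primary P 2 (a := 1 + orb d c₀ k * w)
    · intro hm
      exact (Ideal.ne_top_iff_one P).mp hP.ne_top
        ((P.add_mem_iff_left (P.mul_mem_right _ hkP)).mp hm)
    · rw [mul_comm, ← hw]; exact hi
  obtain ⟨U, Z, hU, hUZ⟩ := key_dvd φ P d hd2 T N hT (by rw [hφX]; exact hTN)
    (by rw [hφX]; exact hTN') k hk (by rw [hφX]; exact hnp k hk) (by rw [hφX]; exact hkP)
    (by rw [hφX]; exact hkm)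
  rw [hφX] at hUZ
  have hdP : (d : (NumberField.RingOfIntegers K)) ∈ P :=
    (hP.mem_or_mem (hUZ ▸ P.mul_mem_right _ hkP : φ U * (d : (NumberField.RingOfIntegers K)) ∈ P)).resolve_left hU
  have hAk : φ (orb d X k) = orb d c₀ k := by rw [orb_map, hφX]
  have H : ∀ g, φ g ∈ P → ∃ s h, φ s ∉ P ∧ φ s * φ g = orb d c₀ k * φ h := by
    intro g hg
    obtain ⟨r, g1, w, hr, hrg⟩ := local_gen φ P d hd hdP (orb d X k) (hAk ▸ hkP)
      (orb_derivative d k hk) g hg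
    refine ⟨U * r, U * g1 + Z * w, ?_, ?_⟩
    · rw [map_mul]; exact fun hm => (hP.mem_or_mem hm).elim hU hr
    · have := congrArg φ hrg
      simp only [map_mul, map_add, hAk] at this ⊢
      rw [show φ (C (d : ℤ)) = (d : (NumberField.RingOfIntegers K)) by simp] at this
      linear_combination φ U * this + φ w * hUZ
  have hnot : ∀ a : (NumberField.RingOfIntegers K), a ≠ 0 → ∃ l, a ∉ P ^ l := by
    intro a ha
    by_contra! hcon
    have := Ideal.iInf_pow_eq_bot_of_isDomain P hP.ne_top
    exact ha (by
      have h : a ∈ (⨅ l : ℕ, P ^ l) := by simpa [Submodule.mem_iInf] using hcon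
      rw [this] at h; simpa using h)
  obtain ⟨y, hyP, hy2⟩ : ∃ y ∈ P, y ∉ P ^ 2 := by
    obtain ⟨y, hy⟩ := SetLike.exists_of_lt (Ideal.pow_right_strictAnti P hPbot hP.ne_top
      (show 1 < 2 by norm_num))
    exact ⟨y, by simpa using hy.1, hy.2⟩
  have hy0 : y ≠ 0 := by rintro rfl; exact hy2 (zero_mem _)
  obtain ⟨M, g, hM, hMg⟩ := exists_int_mul K c₀ hgen y
  have hM0 : (M : (NumberField.RingOfIntegers K)) ≠ 0 := Int.cast_ne_zero.mpr hM
  have hMg : (M : (NumberField.RingOfIntegers K)) * y = φ g := hMg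
  obtain ⟨l1, hl1⟩ := hnot _ hM0
  obtain ⟨l2, hl2⟩ := hnot _ (mul_ne_zero hM0 hy0)
  obtain ⟨e, σ, σ', hσ, hσ', he⟩ := local_form φ P _ hkP H l1 (C M) (by simpa using hl1)
  obtain ⟨f, τ, τ', hτ, hτ', hf⟩ := local_form φ P _ hkP H l2 g (hMg ▸ hl2)
  rw [show φ (C M) = (M : (NumberField.RingOfIntegers K)) by simp] at he
  have hx0 := hnp k hk
  generalize orb d c₀ k = x at *
  have hmain : φ τ * φ σ' * x ^ e * y = x ^ f * (φ τ' * φ σ) := by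
    linear_combination (-φ τ * y) * he + φ σ * hf + φ σ * φ τ * hMg
  rcases le_or_gt f e with hfe | hfe
  · obtain ⟨q, rfl⟩ := Nat.exists_eq_add_of_le hfe
    have : φ τ * φ σ' * x ^ q * y = φ τ' * φ σ :=
      mul_left_cancel₀ (pow_ne_zero f hx0) (by rw [← hmain]; ring)
    have hmem : φ τ' * φ σ ∈ P := this ▸ P.mul_mem_left _ hyP
    exact (hP.mem_or_mem hmem).elim hτ' hσ
  · obtain ⟨q, rfl⟩ := Nat.exists_eq_add_of_lt hfe
    have : φ τ * φ σ' * y = x * (x ^ q * (φ τ' * φ σ)) :=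
      mul_left_cancel₀ (pow_ne_zero e hx0) (by linear_combination hmain)
    apply hy2
    apply pow_primary P 2 (a := φ τ * φ σ') (fun hm => (hP.mem_or_mem hm).elim hτ hσ')
    rw [this]
    exact Ideal.mul_mem_right _ _ hx2
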